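/- (Convergence proposition for MAMRL gradient steps.) Let n ≥ 1, fix an index i ∈ {1, …, n}, and let a = (a_1, …, a_n) be distributed uniformly on {0,1}^n. Define ĝ = (∏_{j=1}^n a_j)·(2a_i − 1). Then the probability that ĝ > 0 equals (1/2)^n. Since the true gradient of the expected reward with respect to θ_i at θ = (1/2, …, 1/2) is the strictly positive number (1/2)^{n−1}, the probability that the estimated gradient and the true gradient have strictly positive product (i.e., the gradient step moves in the correct direction) equals (1/2)^n, which decreases exponentially in the number n of agents. -/

import Mathlib

open MeasureTheory

/-!
The score `2 a_i - 1` equals `1` wherever the reward `∏ j, a_j` is nonzero, so the estimator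
coincides with the reward: it is the indicator of the single action vector `1` among `2 ^ n`.
On the other hand `L` is linear in each coordinate, with positive slope at `(1/2, …, 1/2)`, so the
estimated gradient has the correct sign exactly at that one vector.
-/

theorem prod_val_fin_two_eq_ite {ι R : Type*} [Fintype ι] [CommSemiring R]
    (a : ι → Fin 2) : ∏ j, ((a j : ℕ) : R) = if a = 1 then 1 else 0 := by
  have val_eq_ite (x : Fin 2) : ((x : ℕ) : R) = if x = 1 then 1 else 0 := by
    fin_cases x <;> simp
  simp only [val_eq_ite, Finset.prod_boole, Finset.mem_univ, true_imp_iff, funext_iff,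
    Pi.one_apply]

theorem prod_val_fin_two_mul_score {ι R : Type*} [Fintype ι] [CommRing R]
    (a : ι → Fin 2) (i : ι) :
    (∏ j, ((a j : ℕ) : R)) * (2 * ((a i : ℕ) : R) - 1) = ∏ j, ((a j : ℕ) : R) := by
  rw [prod_val_fin_two_eq_ite]
  split_ifs with ha
  · norm_num [ha]
  · rw [zero_mul]

theorem prod_val_fin_two_mul_score_pos_iff {ι R : Type*} [Fintype ι] [CommRing R]
    [PartialOrder R] [IsOrderedRing R] [Nontrivial R] (a : ι → Fin 2) (i : ι) :
    0 < (∏ j, ((a j : ℕ) : R)) * (2 * ((a i : ℕ) : R) - 1) ↔ a = 1 := by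
  rw [prod_val_fin_two_mul_score, prod_val_fin_two_eq_ite]
  split_ifs with ha <;> simp [ha]

theorem uniformOfFintype_pi_toMeasure_singleton {ι κ : Type*} [Fintype ι] [DecidableEq ι]
    [Fintype κ] [Nonempty κ] [MeasurableSpace κ] [MeasurableSingletonClass κ] (a : ι → κ) :
    (PMF.uniformOfFintype (ι → κ)).toMeasure {a} =
      ((1 : ENNReal) / Fintype.card κ) ^ Fintype.card ι := by
  rw [PMF.toMeasure_apply_singleton _ _ (measurableSet_singleton a), PMF.uniformOfFintype_apply,
    Fintype.card_fun, Nat.cast_pow, ENNReal.inv_pow, one_div]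

theorem hasDerivAt_prod_update {ι 𝕜 : Type*} [DecidableEq ι] [NontriviallyNormedField 𝕜]
    {s : Finset ι} {i : ι} (hi : i ∈ s) (θ : ι → 𝕜) (t : 𝕜) :
    HasDerivAt (fun u => ∏ j ∈ s, Function.update θ i u j) (∏ j ∈ s.erase i, θ j) t := by
  simp only [Finset.prod_update_of_mem hi, ← Finset.erase_eq]
  exact hasDerivAt_mul_const _

/-- Convergence proposition for MAMRL gradient steps: for `a`
uniform on `{0,1}^n` and the estimator `ĝ(a) = (∏ j, a j)·(2·a i − 1)`, the
probability that `ĝ > 0` equals `(1/2)^n`; the true gradient of the expected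
reward `L(θ) = ∏ j, θ j` with respect to coordinate `i` at `θ = (1/2,…,1/2)` is
the strictly positive number `(1/2)^{n−1}`; and the probability that the
estimated gradient and the true gradient have strictly positive product equals
`(1/2)^n`. -/
theorem stmt_8 (n : ℕ) (hn : 1 ≤ n) (i : Fin n)
    (g : (Fin n → Fin 2) → ℝ)
    (hg : ∀ a, g a = (∏ j, ((a j : ℕ) : ℝ)) * (2 * ((a i : ℕ) : ℝ) - 1))
    (L : (Fin n → ℝ) → ℝ) (hL : ∀ θ, L θ = ∏ j, θ j) :
    ((PMF.uniformOfFintype (Fin n → Fin 2)).toMeasure {a | 0 < g a} =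
        ((1 : ENNReal) / 2) ^ n) ∧
      HasDerivAt (fun t : ℝ => L (Function.update (fun _ => (1 / 2 : ℝ)) i t))
        (((1 : ℝ) / 2) ^ (n - 1)) (1 / 2) ∧
      (0 : ℝ) < ((1 : ℝ) / 2) ^ (n - 1) ∧
      (PMF.uniformOfFintype (Fin n → Fin 2)).toMeasure
          {a | 0 < g a * ((1 : ℝ) / 2) ^ (n - 1)} =
        ((1 : ENNReal) / 2) ^ n := by
  have estimator_pos_iff (a : Fin n → Fin 2) : 0 < g a ↔ a = 1 := by
    rw [hg]
    exact prod_val_fin_two_mul_score_pos_iff a i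
  have prob_ones : (PMF.uniformOfFintype (Fin n → Fin 2)).toMeasure {1} =
      ((1 : ENNReal) / 2) ^ n := by
    simpa using uniformOfFintype_pi_toMeasure_singleton (1 : Fin n → Fin 2)
  have gradient_pos : (0 : ℝ) < (1 / 2) ^ (n - 1) := by positivity
  refine ⟨?_, ?_, gradient_pos, ?_⟩
  · simpa only [estimator_pos_iff, Set.ofPred_eq_eq_singleton] using prob_ones
  · simpa [hL] using
      hasDerivAt_prod_update (Finset.mem_univ i) (fun _ => (1 / 2 : ℝ)) (1 / 2)
  · simpa only [mul_pos_iff_of_pos_right gradient_pos, estimator_pos_iff,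
      Set.ofPred_eq_eq_singleton] using prob_ones
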